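/- arXiv:1611.00516 — 6 statements merged into one kernel-verified Lean document; each statement's English description precedes it below -/
import Mathlib

section
/- Let μ₁, μ₂, μ₃, μ₄ be real numbers with μ₁ + μ₂ + μ₃ + μ₄ = 0. Then μ₁³ + μ₂³ + μ₃³ + μ₄³ ≤ (1/√3)·(μ₁² + μ₂² + μ₃² + μ₄²)^{3/2}. -/
theorem stmt_2 (μ₁ μ₂ μ₃ μ₄ : ℝ) (hsum : μ₁ + μ₂ + μ₃ + μ₄ = 0) :
    μ₁^3 + μ₂^3 + μ₃^3 + μ₄^3 ≤
      (1 / Real.sqrt 3) * (μ₁^2 + μ₂^2 + μ₃^2 + μ₄^2) ^ ((3 : ℝ)/2) := by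
  obtain ⟨c, hc0, hc⟩ : ∃ c : ℝ, 0 ≤ c ∧ μ₁^2 + μ₂^2 + μ₃^2 + μ₄^2 = 12 * c^2 := by
    refine ⟨Real.sqrt ((μ₁^2 + μ₂^2 + μ₃^2 + μ₄^2) / 12), Real.sqrt_nonneg _, ?_⟩
    rw [Real.sq_sqrt (by positivity)]
    ring
  have h3 : Real.sqrt 3 ^ 2 = 3 := Real.sq_sqrt (by norm_num)
  have hpos : 0 < Real.sqrt 3 := Real.sqrt_pos.mpr (by norm_num)
  have hR : (1 / Real.sqrt 3) * (μ₁^2 + μ₂^2 + μ₃^2 + μ₄^2) ^ ((3 : ℝ)/2) = 24 * c^3 := by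
    have h12 : 12 * c^2 = (2 * Real.sqrt 3 * c) ^ (2 : ℝ) := by
      rw [Real.rpow_two]
      linear_combination (-4 * c^2) * h3
    rw [hc, h12, ← Real.rpow_mul (by positivity)]
    have : (2 : ℝ) * (3 / 2) = ((3 : ℕ) : ℝ) := by norm_num
    rw [this, Real.rpow_natCast]
    field_simp
    linear_combination (8 * c^3) * h3
  rw [hR]
  have key : ∀ x y z w : ℝ, x + y + z + w = 0 → x^2 + y^2 + z^2 + w^2 = 12 * c^2 →
      (x - 3 * c) * (x + c)^2 ≤ 0 := by
    intro x y z w h h'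
    have hx : x ≤ 3 * c := by
      refine le_trans (le_abs_self x) (abs_le_of_sq_le_sq ?_ (by positivity))
      have : x = -(y + z + w) := by linarith
      have h2 : x^2 = (y + z + w)^2 := by rw [this]; ring
      nlinarith [sq_nonneg (y - z), sq_nonneg (y - w), sq_nonneg (z - w)]
    exact mul_nonpos_of_nonpos_of_nonneg (by linarith) (sq_nonneg _)
  have k1 := key μ₁ μ₂ μ₃ μ₄ (by linarith) (by linarith)
  have k2 := key μ₂ μ₁ μ₃ μ₄ (by linarith) (by linarith)
  have k3 := key μ₃ μ₁ μ₂ μ₄ (by linarith) (by linarith)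
  have k4 := key μ₄ μ₁ μ₂ μ₃ (by linarith) (by linarith)
  have e1 : c^2 * (μ₁ + μ₂ + μ₃ + μ₄) = 0 := by rw [hsum]; ring
  have e2 : c * (μ₁^2 + μ₂^2 + μ₃^2 + μ₄^2) = c * (12 * c^2) := by rw [hc]
  linarith
end

section
/- Let μ₁, μ₂, μ₃, μ₄ be real numbers with μ₁ + μ₂ + μ₃ + μ₄ = 0, μ₁ > 0, and μ₂ < 0, μ₃ < 0, μ₄ < 0. Let r₁₂, r₁₃, r₁₄, r₂₃, r₂₄, r₃₄ be real numbers, each lying in the interval [0,1]. Then (μ₁² + μ₂² − 2(μ₃² + μ₄²))·r₁₂ + (μ₁² + μ₃² − 2(μ₂² + μ₄²))·r₁₃ + (μ₁² + μ₄² − 2(μ₂² + μ₃²))·r₁₄ + (μ₂² + μ₃² − 2(μ₁² + μ₄²))·r₂₃ + (μ₂² + μ₄² − 2(μ₁² + μ₃²))·r₂₄ + (μ₃² + μ₄² − 2(μ₁² + μ₂²))·r₃₄ ≤ (3/2)·(μ₁² + μ₂² + μ₃² + μ₄²). -/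
theorem stmt_4 (μ₁ μ₂ μ₃ μ₄ : ℝ) (hsum : μ₁ + μ₂ + μ₃ + μ₄ = 0)
    (h1 : μ₁ > 0) (h2 : μ₂ < 0) (h3 : μ₃ < 0) (h4 : μ₄ < 0)
    (r₁₂ r₁₃ r₁₄ r₂₃ r₂₄ r₃₄ : ℝ)
    (hr12 : r₁₂ ∈ Set.Icc (0:ℝ) 1) (hr13 : r₁₃ ∈ Set.Icc (0:ℝ) 1)
    (hr14 : r₁₄ ∈ Set.Icc (0:ℝ) 1) (hr23 : r₂₃ ∈ Set.Icc (0:ℝ) 1)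
    (hr24 : r₂₄ ∈ Set.Icc (0:ℝ) 1) (hr34 : r₃₄ ∈ Set.Icc (0:ℝ) 1) :
    (μ₁^2 + μ₂^2 - 2 * (μ₃^2 + μ₄^2)) * r₁₂
    + (μ₁^2 + μ₃^2 - 2 * (μ₂^2 + μ₄^2)) * r₁₃
    + (μ₁^2 + μ₄^2 - 2 * (μ₂^2 + μ₃^2)) * r₁₄
    + (μ₂^2 + μ₃^2 - 2 * (μ₁^2 + μ₄^2)) * r₂₃
    + (μ₂^2 + μ₄^2 - 2 * (μ₁^2 + μ₃^2)) * r₂₄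
    + (μ₃^2 + μ₄^2 - 2 * (μ₁^2 + μ₂^2)) * r₃₄
    ≤ (3/2) * (μ₁^2 + μ₂^2 + μ₃^2 + μ₄^2) := by
  have e : μ₁ = -(μ₂ + μ₃ + μ₄) := by linarith
  have hlow : μ₂^2 + μ₃^2 + μ₄^2 ≤ μ₁^2 := by
    rw [e]
    nlinarith [mul_pos_of_neg_of_neg h2 h3, mul_pos_of_neg_of_neg h2 h4,
      mul_pos_of_neg_of_neg h3 h4]
  have hup : μ₁^2 ≤ 3 * (μ₂^2 + μ₃^2 + μ₄^2) := by
    rw [e]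
    nlinarith [sq_nonneg (μ₂ - μ₃), sq_nonneg (μ₂ - μ₄), sq_nonneg (μ₃ - μ₄)]
  have p2 := sq_nonneg μ₂
  have p3 := sq_nonneg μ₃
  have p4 := sq_nonneg μ₄
  have n23 := mul_nonpos_of_nonpos_of_nonneg
    (show μ₂^2 + μ₃^2 - 2 * (μ₁^2 + μ₄^2) ≤ 0 by linarith) hr23.1
  have n24 := mul_nonpos_of_nonpos_of_nonneg
    (show μ₂^2 + μ₄^2 - 2 * (μ₁^2 + μ₃^2) ≤ 0 by linarith) hr24.1
  have n34 := mul_nonpos_of_nonpos_of_nonneg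
    (show μ₃^2 + μ₄^2 - 2 * (μ₁^2 + μ₂^2) ≤ 0 by linarith) hr34.1
  have key : ∀ c r : ℝ, r ∈ Set.Icc (0:ℝ) 1 → c * r ≤ 0 ∨ c * r ≤ c := by
    intro c r hr
    rcases le_total c 0 with h | h
    · exact Or.inl (mul_nonpos_of_nonpos_of_nonneg h hr.1)
    · exact Or.inr (mul_le_of_le_one_right h hr.2)
  rcases key (μ₁^2 + μ₂^2 - 2 * (μ₃^2 + μ₄^2)) _ hr12 with a | a <;>
  rcases key (μ₁^2 + μ₃^2 - 2 * (μ₂^2 + μ₄^2)) _ hr13 with b | b <;>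
  rcases key (μ₁^2 + μ₄^2 - 2 * (μ₂^2 + μ₃^2)) _ hr14 with c | c <;>
  linarith
end

section
/- Let n ≥ 4 be an integer and let μ : Fin n → ℝ satisfy ∑_{i} μ_i = 0. Then the following are equivalent: (1) for all i ≠ j, (μ_i + μ_j)² + (n − 4)·μ_i·μ_j = (∑_k μ_k²)/(n − 1); (2) there exist a real number μ and an index i₀ such that μ_{i₀} = −(n − 1)·μ and μ_i = μ for every i ≠ i₀. -/
theorem aux_sum (n : ℕ) (f : Fin n → ℝ) (i₀ : Fin n) (m : ℝ)
    (h : ∀ i, i ≠ i₀ → f i = m) : ∑ i, f i = f i₀ + ((n : ℝ) - 1) * m := by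
  rw [← Finset.add_sum_erase _ _ (Finset.mem_univ i₀),
    Finset.sum_congr rfl (fun i hi => h i (Finset.ne_of_mem_erase hi))]
  have : 1 ≤ n := by have := i₀.2; omega
  simp [Finset.card_erase_of_mem, Nat.cast_sub this]

theorem aux_ex (n : ℕ) (s : Finset (Fin n)) (h : s.card < n) : ∃ i, i ∉ s := by
  by_contra hc
  push Not at hc
  have : s = Finset.univ := Finset.eq_univ_iff_forall.2 hc
  simp [this] at h

theorem stmt_13 (n : ℕ) (hn : 4 ≤ n) (μ : Fin n → ℝ)
    (hsum : ∑ i, μ i = 0) :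
    (∀ i j : Fin n, i ≠ j →
        (μ i + μ j)^2 + ((n : ℝ) - 4) * (μ i * μ j) = (∑ k, (μ k)^2) / ((n : ℝ) - 1))
    ↔ (∃ (m : ℝ) (i₀ : Fin n), μ i₀ = -((n : ℝ) - 1) * m ∧ ∀ i : Fin n, i ≠ i₀ → μ i = m) := by
  have hn' : (4 : ℝ) ≤ n := by exact_mod_cast hn
  constructor
  · intro h
    have A : ∀ i j k l : Fin n, i ≠ j → i ≠ k → l ≠ j → l ≠ k → μ j ≠ μ k → μ i = μ l := by
      intro i j k l hij hik hlj hlk hne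
      have h1 := h i j hij
      have h2 := h i k hik
      have h3 := h l j hlj
      have h4 := h l k hlk
      have e1 : (μ j - μ k) * (((n : ℝ) - 2) * (μ i - μ l)) = 0 := by
        linear_combination h1 - h2 - h3 + h4
      have e2 : ((n : ℝ) - 2) * (μ i - μ l) = 0 :=
        (mul_eq_zero.1 e1).resolve_left (sub_ne_zero.2 hne)
      exact sub_eq_zero.1 ((mul_eq_zero.1 e2).resolve_left (by linarith))
    suffices H : ∃ (m : ℝ) (i₀ : Fin n), ∀ i : Fin n, i ≠ i₀ → μ i = m by
      obtain ⟨m, i₀, hm⟩ := H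
      refine ⟨m, i₀, ?_, hm⟩
      have := aux_sum n μ i₀ m hm
      linarith
    by_cases hall : ∀ j k, μ j = μ k
    · exact ⟨μ ⟨0, by omega⟩, ⟨0, by omega⟩, fun i _ => hall _ _⟩
    push Not at hall
    obtain ⟨j, k, hjk⟩ := hall
    have hjk' : j ≠ k := fun e => hjk (by rw [e])
    obtain ⟨i, hi⟩ := aux_ex n {j, k} (by have := Finset.card_le_two (a := j) (b := k); omega)
    obtain ⟨l, hl⟩ := aux_ex n {i, j, k}
      (by have := Finset.card_le_three (a := i) (b := j) (c := k); omega)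
    simp only [Finset.mem_insert, Finset.mem_singleton, not_or] at hi hl
    have B : ∀ x, x ≠ j → x ≠ k → μ x = μ i := fun x hx hx' =>
      A x j k i hx hx' hi.1 hi.2 hjk
    by_cases c1 : μ i = μ k
    · refine ⟨μ k, j, fun x hx => ?_⟩
      by_cases hxk : x = k
      · rw [hxk]
      · rw [B x hx hxk, c1]
    by_cases c2 : μ i = μ j
    · refine ⟨μ j, k, fun x hx => ?_⟩
      by_cases hxk : x = j
      · rw [hxk]
      · rw [B x hxk hx, c2]
    exfalso
    have := A k j i l hjk'.symm (Ne.symm hi.2) hl.2.1 hl.1 (Ne.symm c2)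
    exact c1 (by rw [this, B l hl.2.1 hl.2.2])
  · rintro ⟨m, i₀, h0, hm⟩ i j hij
    have hS := aux_sum n (fun k => (μ k)^2) i₀ (m^2) (fun i hi => by simp only [hm i hi])
    have hne : (n : ℝ) - 1 ≠ 0 := by linarith
    rw [eq_div_iff hne, hS]
    simp only [h0]
    by_cases hi : i = i₀
    · have hj : j ≠ i₀ := fun e => hij (hi.trans e.symm)
      rw [hi, hm j hj, h0]; ring
    · by_cases hj : j = i₀
      · rw [hj, hm i hi, h0]; ring
      · rw [hm i hi, hm j hj]; ring
end

section
/- Let R : Fin 4 → Fin 4 → Fin 4 → Fin 4 → ℝ satisfy the curvature symmetries R_{ijkl} = −R_{jikl} = −R_{ijlk} = R_{klij} for all i, j, k, l. Define Ric_{ij} = ∑_k R_{ikjk}, S = ∑_i Ric_{ii}, and W_{ijkl} = R_{ijkl} − (1/2)(Ric_{ik}δ_{jl} − Ric_{il}δ_{jk} + Ric_{jl}δ_{ik} − Ric_{jk}δ_{il}) + (S/6)(δ_{ik}δ_{jl} − δ_{il}δ_{jk}), where δ is the Kronecker delta. Then for every enumeration i, j, k, l of the four distinct indices of Fin 4, one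 has S/6 = R_{ijij} + R_{klkl} − 2·W_{ijij}. -/
/-- Kronecker delta on `Fin 4`. -/
def kdelta (i j : Fin 4) : ℝ := if i = j then 1 else 0

/-- Ricci contraction of a curvature array. -/
def ricci (R : Fin 4 → Fin 4 → Fin 4 → Fin 4 → ℝ) (i j : Fin 4) : ℝ :=
  ∑ k, R i k j k

/-- Scalar curvature of a curvature array. -/
def scal (R : Fin 4 → Fin 4 → Fin 4 → Fin 4 → ℝ) : ℝ :=
  ∑ i, ricci R i i

/-- Weyl tensor of a curvature array on a 4-dimensional space
(orthonormal frame, metric = Kronecker delta). -/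
noncomputable def weyl (R : Fin 4 → Fin 4 → Fin 4 → Fin 4 → ℝ) (i j k l : Fin 4) : ℝ :=
  R i j k l
    - (1/2) * (ricci R i k * kdelta j l - ricci R i l * kdelta j k
        + ricci R j l * kdelta i k - ricci R j k * kdelta i l)
    + (scal R / 6) * (kdelta i k * kdelta j l - kdelta i l * kdelta j k)

theorem stmt_15 (R : Fin 4 → Fin 4 → Fin 4 → Fin 4 → ℝ)
    (hanti1 : ∀ i j k l, R i j k l = -R j i k l)
    (hanti2 : ∀ i j k l, R i j k l = -R i j l k)
    (hpair : ∀ i j k l, R i j k l = R k l i j)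
    (i j k l : Fin 4)
    (hij : i ≠ j) (hik : i ≠ k) (hil : i ≠ l)
    (hjk : j ≠ k) (hjl : j ≠ l) (hkl : k ≠ l) :
    scal R / 6 = R i j i j + R k l k l - 2 * weyl R i j i j := by
  have hs : ∀ f : Fin 4 → ℝ, ∑ x, f x = f i + f j + f k + f l := by
    intro f
    have hu : (Finset.univ : Finset (Fin 4)) = {i, j, k, l} := by
      symm
      apply Finset.eq_univ_of_card
      simp [*]
    rw [hu, Finset.sum_insert (by simp [*]), Finset.sum_insert (by simp [*]),
      Finset.sum_insert (by simp [*]), Finset.sum_singleton]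
    ring
  have h0 : ∀ a b, R a a b b = 0 := fun a b => by linarith [hanti1 a a b b]
  have h1 : ∀ a, R a a a a = 0 := fun a => h0 a a
  have hsw : ∀ a b, R a b a b = R b a b a := fun a b => by
    linarith [hanti1 a b a b, hanti2 b a a b]
  simp only [weyl, scal, ricci, hs, kdelta, if_neg hij, if_neg hij.symm, if_true, h1]
  linarith [hsw i j, hsw i k, hsw i l, hsw j k, hsw j l, hsw k l]
end

section
/- There exists a constant ε₀ > 0 with the following property. Let R̄ : Fin 4 → Fin 4 → Fin 4 → Fin 4 → ℝ satisfy the curvature symmetries R̄_{ijkl} = −R̄_{jikl} = −R̄_{ijlk} = R̄_{klij} and the first Bianchi identity R̄_{ijkl} + R̄_{jkil} + R̄_{kijl} = 0, and suppose 0 ≤ R̄_{ijij} ≤ 1 for all i ≠ j. Let λ₁, λ₂, λ₃, λ₄ be real numbers and set H = (λ₁ + λ₂ + λ₃ + λ₄)/4. Define R_{ijkl} = R̄_{ijkl} + λ_i·λ_j·(δ_{ik}δ_{jl} − δ_{il}δ_{jk}), Ric_{ij} = ∑_k R_{ikjk}, S = ∑_i Ric_{ii}, |Ric|² = ∑_{i,j}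 Ric_{ij}², and W_{ijkl} = R_{ijkl} − (1/2)(Ric_{ik}δ_{jl} − Ric_{il}δ_{jk} + Ric_{jl}δ_{ik} − Ric_{jk}δ_{il}) + (S/6)(δ_{ik}δ_{jl} − δ_{il}δ_{jk}). If W_{ijkl} = 0 for all i, j, k, l and |H| ≤ ε₀, then S²/12 − |Ric|²/4 ≤ 3·(1 + H²)². -/
/-- The curvature of the hypersurface obtained from the ambient curvature `Rbar`
and the principal curvatures `lam` via the Gauss equation. -/
def gaussCurv (Rbar : Fin 4 → Fin 4 → Fin 4 → Fin 4 → ℝ) (lam : Fin 4 → ℝ)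
    (i j k l : Fin 4) : ℝ :=
  Rbar i j k l + lam i * lam j * (kdelta i k * kdelta j l - kdelta i l * kdelta j k)

/-- Squared norm of the Ricci tensor. -/
def ricciNormSq (R : Fin 4 → Fin 4 → Fin 4 → Fin 4 → ℝ) : ℝ :=
  ∑ i, ∑ j, (ricci R i j)^2

theorem pair_aux (x y z w r1 r2 r3 r4 r5 r6 s : ℝ)
    (h1 : 0 ≤ r1) (h2 : 0 ≤ r2) (h3 : 0 ≤ r3) (h4 : 0 ≤ r4)
    (h5 : 0 ≤ r5) (h6 : 0 ≤ r6)
    (e1 : (r1 + x * y) + (r2 + z * w) = s)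
    (e2 : (r3 + x * z) + (r4 + y * w) = s)
    (e3 : (r5 + x * w) + (r6 + y * z) = s) (hs : s < 0) :
    (r1 + x * y) * (r2 + z * w) ≤ 0 := by
  by_contra hc
  push Not at hc
  rcases pos_and_pos_or_neg_and_neg_of_mul_pos hc with ⟨ha, hb⟩ | ⟨ha, hb⟩
  · linarith
  have hxy : x * y < 0 := by linarith
  have hzw : z * w < 0 := by linarith
  rcases mul_neg_iff.mp hxy with ⟨hx, hy⟩ | ⟨hx, hy⟩ <;>
  rcases mul_neg_iff.mp hzw with ⟨hz, hw⟩ | ⟨hz, hw⟩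
  · linarith [mul_pos hx hz, mul_pos_of_neg_of_neg hy hw]
  · linarith [mul_pos hx hw, mul_pos_of_neg_of_neg hy hz]
  · linarith [mul_pos_of_neg_of_neg hx hw, mul_pos hy hz]
  · linarith [mul_pos_of_neg_of_neg hx hz, mul_pos hy hw]

theorem core_aux (x y z w a b c d e f s H : ℝ)
    (ha : 0 ≤ a ∧ a ≤ 1) (hb : 0 ≤ b ∧ b ≤ 1) (hc : 0 ≤ c ∧ c ≤ 1)
    (hd : 0 ≤ d ∧ d ≤ 1) (he : 0 ≤ e ∧ e ≤ 1) (hf : 0 ≤ f ∧ f ≤ 1)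
    (hH : H = (x + y + z + w) / 4)
    (e1 : (a + x * y) + (b + z * w) = s)
    (e2 : (c + x * z) + (d + y * w) = s)
    (e3 : (e + x * w) + (f + y * z) = s) :
    (a + x * y) * (b + z * w) + (c + x * z) * (d + y * w) + (e + x * w) * (f + y * z)
      ≤ 3 * (1 + H ^ 2) ^ 2 := by
  rcases lt_or_ge s 0 with hs | hs
  · have p1 := pair_aux x y z w a b c d e f s ha.1 hb.1 hc.1 hd.1 he.1 hf.1 e1 e2 e3 hs
    have p2 := pair_aux x z y w c d a b e f s hc.1 hd.1 ha.1 hb.1 he.1 hf.1 e2 e1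
      (by linarith) hs
    have p3 := pair_aux x w y z e f a b c d s he.1 hf.1 ha.1 hb.1 hc.1 hd.1 e3
      (by linarith) (by linarith) hs
    have : 0 ≤ 3 * (1 + H ^ 2) ^ 2 := by positivity
    linarith
  · have hs2 : s ≤ 2 * (1 + H ^ 2) := by
      subst hH
      nlinarith [sq_nonneg (x - y), sq_nonneg (x - z), sq_nonneg (x - w), sq_nonneg (y - z),
        sq_nonneg (y - w), sq_nonneg (z - w)]
    have am : ∀ u v : ℝ, u + v = s → u * v ≤ s ^ 2 / 4 := by
      intro u v h
      subst h
      nlinarith [sq_nonneg (u - v)]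
    have hsq : s ^ 2 ≤ (2 * (1 + H ^ 2)) ^ 2 := pow_le_pow_left₀ hs hs2 2
    linarith [am _ _ e1, am _ _ e2, am _ _ e3]

theorem stmt_16 :
    ∃ ε₀ : ℝ, 0 < ε₀ ∧
      ∀ (Rbar : Fin 4 → Fin 4 → Fin 4 → Fin 4 → ℝ) (lam : Fin 4 → ℝ) (H : ℝ),
        (∀ i j k l, Rbar i j k l = -Rbar j i k l) →
        (∀ i j k l, Rbar i j k l = -Rbar i j l k) →
        (∀ i j k l, Rbar i j k l = Rbar k l i j) →
        (∀ i j k l, Rbar i j k l + Rbar j k i l + Rbar k i j l = 0) →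
        (∀ i j, i ≠ j → 0 ≤ Rbar i j i j ∧ Rbar i j i j ≤ 1) →
        H = (lam 0 + lam 1 + lam 2 + lam 3) / 4 →
        (∀ i j k l, weyl (gaussCurv Rbar lam) i j k l = 0) →
        |H| ≤ ε₀ →
        (scal (gaussCurv Rbar lam))^2 / 12 - ricciNormSq (gaussCurv Rbar lam) / 4
          ≤ 3 * (1 + H^2)^2 := by
  refine ⟨1, one_pos, ?_⟩
  intro Rbar lam H hs1 hs2 _ _ hb hH hW _
  have kne : ∀ i j, i ≠ j →
      gaussCurv Rbar lam i j i j = Rbar i j i j + lam i * lam j := fun i j h => by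
    simp [gaussCurv, kdelta, h]
  have w01 := hW 0 1 0 1
  have w23 := hW 2 3 2 3
  have w02 := hW 0 2 0 2
  have w13 := hW 1 3 1 3
  have w03 := hW 0 3 0 3
  have w12 := hW 1 2 1 2
  generalize hR : gaussCurv Rbar lam = R at *
  have hN : (ricci R 0 0)^2 + (ricci R 1 1)^2 + (ricci R 2 2)^2 + (ricci R 3 3)^2
      ≤ ricciNormSq R := by
    simp only [ricciNormSq, Fin.sum_univ_four]
    nlinarith [sq_nonneg (ricci R 0 1), sq_nonneg (ricci R 0 2), sq_nonneg (ricci R 0 3),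
      sq_nonneg (ricci R 1 0), sq_nonneg (ricci R 1 2), sq_nonneg (ricci R 1 3),
      sq_nonneg (ricci R 2 0), sq_nonneg (ricci R 2 1), sq_nonneg (ricci R 2 3),
      sq_nonneg (ricci R 3 0), sq_nonneg (ricci R 3 1), sq_nonneg (ricci R 3 2)]
  have hS : scal R = ricci R 0 0 + ricci R 1 1 + ricci R 2 2 + ricci R 3 3 := by
    simp only [scal, Fin.sum_univ_four]
  simp only [weyl] at w01 w23 w02 w13 w03 w12
  rw [kne _ _ (by decide)] at w01 w23 w02 w13 w03 w12
  simp [kdelta] at w01 w23 w02 w13 w03 w12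
  have key := core_aux (lam 0) (lam 1) (lam 2) (lam 3) (Rbar 0 1 0 1) (Rbar 2 3 2 3)
    (Rbar 0 2 0 2) (Rbar 1 3 1 3) (Rbar 0 3 0 3) (Rbar 1 2 1 2) (scal R / 6) H
    (hb _ _ (by decide)) (hb _ _ (by decide)) (hb _ _ (by decide)) (hb _ _ (by decide))
    (hb _ _ (by decide)) (hb _ _ (by decide)) hH
    (by linarith) (by linarith) (by linarith)
  refine le_trans ?_ key
  have q01 : Rbar 0 1 0 1 + lam 0 * lam 1 = (ricci R 0 0 + ricci R 1 1) / 2 - scal R / 6 := by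
    linarith
  have q23 : Rbar 2 3 2 3 + lam 2 * lam 3 = (ricci R 2 2 + ricci R 3 3) / 2 - scal R / 6 := by
    linarith
  have q02 : Rbar 0 2 0 2 + lam 0 * lam 2 = (ricci R 0 0 + ricci R 2 2) / 2 - scal R / 6 := by
    linarith
  have q13 : Rbar 1 3 1 3 + lam 1 * lam 3 = (ricci R 1 1 + ricci R 3 3) / 2 - scal R / 6 := by
    linarith
  have q03 : Rbar 0 3 0 3 + lam 0 * lam 3 = (ricci R 0 0 + ricci R 3 3) / 2 - scal R / 6 := by
    linarith
  have q12 : Rbar 1 2 1 2 + lam 1 * lam 2 = (ricci R 1 1 + ricci R 2 2) / 2 - scal R / 6 := by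
    linarith
  rw [q01, q23, q02, q13, q03, q12, hS]
  nlinarith [hN]
end

section
/- Let R̄ : Fin 4 → Fin 4 → Fin 4 → Fin 4 → ℝ satisfy the curvature symmetries R̄_{ijkl} = −R̄_{jikl} = −R̄_{ijlk} = R̄_{klij} and the first Bianchi identity R̄_{ijkl} + R̄_{jkil} + R̄_{kijl} = 0, and suppose 0 ≤ R̄_{ijij} ≤ 1 for all i ≠ j. Let λ₁, λ₂, λ₃, λ₄ be real numbers and set H = (λ₁ + λ₂ + λ₃ + λ₄)/4. Define R_{ijkl} = R̄_{ijkl} + λ_i·λ_j·(δ_{ik}δ_{jl} − δ_{il}δ_{jk}), Ric_{ij} = ∑_k R_{ikjk}, S = ∑_i Ric_{ii}, |Ric|² = ∑_{i,j} Ric_{ij}², and W_{ijkl} = R_{ijkl} − (1/2)(Ric_{ik}δ_{jl} − Ric_{il}δ_{jk} + Ric_{jl}δ_{ik} − Ric_{jk}δ_{il}) + (S/6)(δ_{ik}δ_{jl} − δ_{il}δ_{jk}). For t ≥ 0 set x₀(t) = 3√3·t + √(3 + 21t²) and x₁(t) = √(12 + 24t²), and define f(t) = (1/3)·((√3/3)·x₁(t)³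 − (t/2)·x₁(t)²) if x₀(t) ≤ x₁(t), and f(t) = (1/3)·((√3/3)·x₀(t)³ − (t/2)·x₀(t)²) otherwise. If W_{ijkl} = 0 for all i, j, k, l, then S²/12 − |Ric|²/4 ≤ 3·(1 + H²)² + 3·|H|·f(|H|). -/
/-- The point `x₀(t) = 3√3 t + √(3 + 21 t²)` where `F` attains its maximum. -/
noncomputable def xzero (t : ℝ) : ℝ := 3 * Real.sqrt 3 * t + Real.sqrt (3 + 21 * t^2)

/-- The threshold `x₁(t) = √(12 + 24 t²)`. -/
noncomputable def xone (t : ℝ) : ℝ := Real.sqrt (12 + 24 * t^2)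

/-- The correction function `f` from the paper. -/
noncomputable def fcorr (t : ℝ) : ℝ :=
  if xzero t ≤ xone t then
    (1/3) * ((Real.sqrt 3 / 3) * (xone t)^3 - (t/2) * (xone t)^2)
  else
    (1/3) * ((Real.sqrt 3 / 3) * (xzero t)^3 - (t/2) * (xzero t)^2)


theorem aux_pair (a b s1 s2 s3 : ℝ) (ha0 : 0 ≤ a) (ha1 : a ≤ 1) (hb0 : 0 ≤ b) (hb1 : b ≤ 1)
    (h : |s1| ≤ |s2| + |s3|) :
    a * ((s1^2 - (s2 - s3)^2)/4) + b * ((s1^2 - (s2+s3)^2)/4) ≤ s1^2/4 := by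
  have h2 : s1^2 ≤ s2^2 + s3^2 + 2 * |s2 * s3| := by
    have := mul_self_le_mul_self (abs_nonneg s1) h
    rw [abs_mul]
    nlinarith [sq_abs s1, sq_abs s2, sq_abs s3]
  have key : ∀ a b u v w : ℝ, 0 ≤ a → a ≤ 1 → 0 ≤ b → u ≤ w → 0 ≤ w → v ≤ 0 → a * u + b * v ≤ w := by
    intro a b u v w ha ha1 hb hu hw hv
    nlinarith [mul_le_mul_of_nonneg_left hu ha, mul_nonneg hb (neg_nonneg.2 hv), mul_nonneg hw (sub_nonneg.2 ha1)]
  rcases le_total 0 (s2 * s3) with h3 | h3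
  · rw [abs_of_nonneg h3] at h2
    apply key _ _ _ _ _ ha0 ha1 hb0 <;> nlinarith [sq_nonneg (s2 - s3), sq_nonneg s1]
  · rw [abs_of_nonpos h3] at h2
    rw [add_comm]
    apply key _ _ _ _ _ hb0 hb1 ha0 <;> nlinarith [sq_nonneg (s2 + s3), sq_nonneg s1]

theorem aux_lin (a b H s : ℝ) (ha0 : 0 ≤ a) (ha1 : a ≤ 1) (hb0 : 0 ≤ b) (hb1 : b ≤ 1) :
    H * s * (b - a) ≤ |H| * |s| := by
  rw [← abs_mul]
  calc H * s * (b - a) ≤ |H * s * (b-a)| := le_abs_self _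
    _ = |H * s| * |b - a| := abs_mul _ _
    _ ≤ |H * s| * 1 := by
      apply mul_le_mul_of_nonneg_left _ (abs_nonneg _)
      rw [abs_le]; constructor <;> linarith
    _ = _ := mul_one _

theorem aux_tri (y1 y2 y3 s1 s2 s3 : ℝ) (h1 : s1^2 = y1) (h2 : s2^2 = y2) (h3 : s3^2 = y3)
    (hX : 12 ≤ y1 + y2 + y3) (h12 : y1 - y2 ≤ 2) (h13 : y1 - y3 ≤ 2)
    (h23 : y2 - y3 ≤ 2) (h32 : y3 - y2 ≤ 2) : |s1| ≤ |s2| + |s3| := by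
  apply abs_le_of_sq_le_sq' _ (by positivity) |>.2
  nlinarith [sq_abs s1, sq_abs s2, sq_abs s3, mul_nonneg (abs_nonneg s2) (abs_nonneg s3)]

theorem aux_cubic (s1 s2 s3 x : ℝ) (hx : 0 ≤ x) (hX : x^2 = s1^2+s2^2+s3^2) :
    3 * |s1 * s2 * s3| ≤ Real.sqrt 3 / 3 * x^3 := by
  have h3 : Real.sqrt 3 ^ 2 = 3 := Real.sq_sqrt (by norm_num)
  have amgm : ∀ a b c : ℝ, 0 ≤ a → 0 ≤ b → 0 ≤ c → 27 * (a*b*c) ≤ (a+b+c)^3 := by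
    intro a b c ha hb hc
    nlinarith [mul_nonneg ha (sq_nonneg (b-c)), mul_nonneg hb (sq_nonneg (a-c)), mul_nonneg hc (sq_nonneg (a-b)),
      mul_nonneg (add_nonneg (add_nonneg ha hb) hc) (sq_nonneg (a-b)),
      mul_nonneg (add_nonneg (add_nonneg ha hb) hc) (sq_nonneg (a-c)),
      mul_nonneg (add_nonneg (add_nonneg ha hb) hc) (sq_nonneg (b-c))]
  have := amgm (s1^2) (s2^2) (s3^2) (by positivity) (by positivity) (by positivity)
  rw [← hX] at this
  apply abs_le_of_sq_le_sq' _ (by positivity) |>.2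
  rw [mul_pow, sq_abs]
  have e : (Real.sqrt 3 / 3 * x^3)^2 = (x^2)^3 / 3 := by
    linear_combination x^6 / 9 * h3
  rw [e]
  linarith

theorem aux_core (a1 b1 a2 b2 a3 b3 H s1 s2 s3 x : ℝ)
    (ha1 : 0 ≤ a1 ∧ a1 ≤ 1) (hb1 : 0 ≤ b1 ∧ b1 ≤ 1)
    (ha2 : 0 ≤ a2 ∧ a2 ≤ 1) (hb2 : 0 ≤ b2 ∧ b2 ≤ 1)
    (ha3 : 0 ≤ a3 ∧ a3 ≤ 1) (hb3 : 0 ≤ b3 ∧ b3 ≤ 1)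
    (hx : 0 ≤ x) (hX : x^2 = s1^2+s2^2+s3^2) (hX1 : 12 + 24 * H^2 ≤ x^2)
    (e12 : s1^2 + a1 + b1 = s2^2 + a2 + b2) (e13 : s1^2 + a1 + b1 = s3^2 + a3 + b3) :
    (a1 + (H^2 + H*s1 + (s1^2-(s2+s3)^2)/4)) * (b1 + (H^2 - H*s1 + (s1^2-(s2-s3)^2)/4))
    + (a2 + (H^2 + H*s2 + (s2^2-(s1+s3)^2)/4)) * (b2 + (H^2 - H*s2 + (s2^2-(s1-s3)^2)/4))
    + (a3 + (H^2 + H*s3 + (s3^2-(s1+s2)^2)/4)) * (b3 + (H^2 - H*s3 + (s3^2-(s1-s2)^2)/4))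
    ≤ 3 * (1+H^2)^2 + (-x^4/24 + |H| * (Real.sqrt 3 / 3 * x^3) - H^2 * x^2/2 + x^2/4) := by
  obtain ⟨ha10, ha11⟩ := ha1
  obtain ⟨hb10, hb11⟩ := hb1
  obtain ⟨ha20, ha21⟩ := ha2
  obtain ⟨hb20, hb21⟩ := hb2
  obtain ⟨ha30, ha31⟩ := ha3
  obtain ⟨hb30, hb31⟩ := hb3
  have hX12 : 12 ≤ s1^2+s2^2+s3^2 := by linarith [sq_nonneg H]
  have p1 := aux_pair a1 b1 s1 s2 s3 ha10 ha11 hb10 hb11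
    (aux_tri _ _ _ _ _ _ rfl rfl rfl (by linarith) (by linarith) (by linarith) (by linarith) (by linarith))
  have p2 := aux_pair a2 b2 s2 s1 s3 ha20 ha21 hb20 hb21
    (aux_tri _ _ _ _ _ _ rfl rfl rfl (by linarith) (by linarith) (by linarith) (by linarith) (by linarith))
  have p3 := aux_pair a3 b3 s3 s1 s2 ha30 ha31 hb30 hb31
    (aux_tri _ _ _ _ _ _ rfl rfl rfl (by linarith) (by linarith) (by linarith) (by linarith) (by linarith))
  have l1 := aux_lin a1 b1 H s1 ha10 ha11 hb10 hb11
  have l2 := aux_lin a2 b2 H s2 ha20 ha21 hb20 hb21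
  have l3 := aux_lin a3 b3 H s3 ha30 ha31 hb30 hb31
  have c := mul_le_mul_of_nonneg_left (aux_cubic s1 s2 s3 x hx hX) (abs_nonneg H)
  have c' : H * (s1*s2*s3) ≤ |H| * |s1*s2*s3| := by
    rw [← abs_mul]; exact le_abs_self _
  have m1 : a1 * b1 ≤ 1 := mul_le_one₀ ha11 hb10 hb11
  have m2 : a2 * b2 ≤ 1 := mul_le_one₀ ha21 hb20 hb21
  have m3 : a3 * b3 ≤ 1 := mul_le_one₀ ha31 hb30 hb31
  have hsum : |s1| + |s2| + |s3| ≤ x^2/2 := by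
    apply abs_le_of_sq_le_sq' _ (by positivity) |>.2
    have : 3 * x^2 ≤ (x^2/2)^2 := by
      have h12 : 0 ≤ x^2 * (x^2 - 12) := mul_nonneg (sq_nonneg x) (by linarith)
      linarith
    have q1 := sq_abs s1
    have q2 := sq_abs s2
    have q3 := sq_abs s3
    linarith [sq_nonneg (|s1|-|s2|), sq_nonneg (|s1|-|s3|), sq_nonneg (|s2|-|s3|)]
  have hs := mul_le_mul_of_nonneg_left hsum (abs_nonneg H)
  have hk : (a1+b1+a2+b2+a3+b3) * H^2 ≤ 6 * H^2 :=
    mul_le_mul_of_nonneg_right (by linarith) (sq_nonneg H)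
  have sqb : ∀ u : ℝ, -2 ≤ u → u ≤ 2 → u^2 ≤ 4 := by intro u h1 h2; exact (sq_le_sq' h1 h2).trans (by norm_num)
  have d1 := sqb (s1^2-s2^2) (by linarith) (by linarith)
  have d2 := sqb (s1^2-s3^2) (by linarith) (by linarith)
  have d3 := sqb (s2^2-s3^2) (by linarith) (by linarith)
  have slack : |H| * (x^2/2) + 3/2 ≤ x^4/48 + H^2 * x^2 := by
    have hx12 : 12 ≤ x^2 := by linarith
    have h4 : x^4 = x^2 * x^2 := by ring
    rw [← sq_abs H, h4]
    linarith [mul_nonneg (sq_nonneg x) (sub_nonneg.2 hx12), mul_nonneg (sq_nonneg (|H| - 1/4)) (sq_nonneg x)]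
  have iden : (a1 + (H^2 + H*s1 + (s1^2-(s2+s3)^2)/4)) * (b1 + (H^2 - H*s1 + (s1^2-(s2-s3)^2)/4))
    + (a2 + (H^2 + H*s2 + (s2^2-(s1+s3)^2)/4)) * (b2 + (H^2 - H*s2 + (s2^2-(s1-s3)^2)/4))
    + (a3 + (H^2 + H*s3 + (s3^2-(s1+s2)^2)/4)) * (b3 + (H^2 - H*s3 + (s3^2-(s1-s2)^2)/4))
    = (a1*b1+a2*b2+a3*b3) + (a1+b1+a2+b2+a3+b3) * H^2
      + (H*s1*(b1-a1) + H*s2*(b2-a2) + H*s3*(b3-a3))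
      + (a1 * ((s1^2 - (s2 - s3)^2)/4) + b1 * ((s1^2 - (s2+s3)^2)/4))
      + (a2 * ((s2^2 - (s1 - s3)^2)/4) + b2 * ((s2^2 - (s1+s3)^2)/4))
      + (a3 * ((s3^2 - (s1 - s2)^2)/4) + b3 * ((s3^2 - (s1+s2)^2)/4))
      + 3*H^4 - 3/2*H^2*(s1^2+s2^2+s3^2) + 3 * (H * (s1*s2*s3))
      - (s1^2+s2^2+s3^2)^2/16 + ((s1^2-s2^2)^2+(s1^2-s3^2)^2+(s2^2-s3^2)^2)/8 := by ring
  rw [iden, ← hX]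
  linarith

theorem aux_F (t x : ℝ) (ht : 0 ≤ t) (hx : xone t ≤ x) :
    -x^4/24 + t * (Real.sqrt 3 / 3 * x^3) - t^2 * x^2/2 + x^2/4 ≤ 3 * t * fcorr t := by
  have hr : Real.sqrt 3 ^ 2 = 3 := Real.sq_sqrt (by norm_num)
  have hr0 : 0 ≤ Real.sqrt 3 := Real.sqrt_nonneg _
  have hw : Real.sqrt (3+21*t^2) ^ 2 = 3 + 21*t^2 := Real.sq_sqrt (by positivity)
  have hw0 : 0 ≤ Real.sqrt (3+21*t^2) := Real.sqrt_nonneg _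
  have h1 : (xone t)^2 = 12 + 24*t^2 := Real.sq_sqrt (by positivity)
  have h10 : 0 ≤ xone t := Real.sqrt_nonneg _
  have hx0 : xzero t = 3 * Real.sqrt 3 * t + Real.sqrt (3+21*t^2) := rfl
  unfold fcorr
  generalize xone t = z at *
  generalize xzero t = y at *
  generalize Real.sqrt 3 = r at *
  generalize Real.sqrt (3+21*t^2) = w at *
  have hrt : 0 ≤ r * t := mul_nonneg hr0 ht
  have hw2 : 2 * (r * t) ≤ w := by
    apply abs_le_of_sq_le_sq' _ hw0 |>.2
    rw [mul_pow, mul_pow, hr, hw]; nlinarith [sq_nonneg t]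
  have hy : 5 * (r*t) ≤ y := by linarith
  have hyq : y^2 = 6*(r*t)*y - 6*t^2 + 3 := by
    rw [hx0]; linear_combination hw - 9 * t^2 * hr
  split_ifs with hc
  · have hzF : -z^4/24 + z^2/4 ≤ 0 := by
      have : z^4 = z^2*z^2 := by ring
      rw [this, h1]; nlinarith [sq_nonneg t, sq_nonneg (t^2)]
    suffices hs : -x^4/24 + t * (r / 3 * x^3) - t^2 * x^2/2 + x^2/4
        ≤ -z^4/24 + t * (r / 3 * z^3) - t^2 * z^2/2 + z^2/4 by nlinarith
    have gx : 0 ≤ x^2 - 6*(r*t)*x + 6*t^2 - 3 - (x-y)^2 := by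
      have : x^2 - 6*(r*t)*x + 6*t^2 - 3 - (x-y)^2 = 2*w*(x-y) := by
        rw [show w = y - 3*r*t by linarith]; linear_combination hyq
      rw [this]; exact mul_nonneg (by positivity) (by linarith)
    have gz : 0 ≤ z^2 - 6*(r*t)*z + 6*t^2 - 3 - (z-y)^2 := by
      have : z^2 - 6*(r*t)*z + 6*t^2 - 3 - (z-y)^2 = 2*w*(z-y) := by
        rw [show w = y - 3*r*t by linarith]; linear_combination hyq
      rw [this]; exact mul_nonneg (by positivity) (by linarith)
    have hxz : 0 ≤ x + z := by linarith
    have k1 := mul_nonneg hxz (add_nonneg gx gz)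
    have k2 : 0 ≤ (x + z - 10*(r*t)) * ((x-y)^2+(z-y)^2) :=
      mul_nonneg (by linarith) (by positivity)
    have k3 : 0 ≤ (r*t) * (10*((x-y)^2+(z-y)^2) - 2*(x-z)^2) :=
      mul_nonneg hrt (by nlinarith [sq_nonneg (x-y+(z-y)), sq_nonneg (x-y), sq_nonneg (z-y)])
    have k4 : 0 ≤ (x+z)*(x^2+z^2+12*t^2-6) - 8*(r*t)*(x^2+x*z+z^2) := by
      linarith
    have k5 := mul_nonneg (sub_nonneg.2 hx) k4
    linarith
  · have hyz : z ≤ y := by linarith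
    have hy0 : 0 ≤ y := by linarith
    have hyF : -y^4/24 + y^2/4 ≤ 0 := by
      have h12 : 12 ≤ y^2 := by nlinarith [sq_nonneg t]
      nlinarith [sq_nonneg y]
    suffices hs : -x^4/24 + t * (r / 3 * x^3) - t^2 * x^2/2 + x^2/4
        ≤ -y^4/24 + t * (r / 3 * y^3) - t^2 * y^2/2 + y^2/4 by nlinarith
    have hxx : 0 ≤ x := by linarith
    have k0 : 0 ≤ (x+y)^2 - 4*(r*t)*(2*x+y) := by
      nlinarith [mul_nonneg hxx (sub_nonneg.2 hy), mul_nonneg hy0 (sub_nonneg.2 hy), mul_nonneg hrt hxx, mul_nonneg hrt hy0]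
    have k1 := mul_nonneg (sq_nonneg (x-y)) k0
    have e : t^2 = ((6*(r*t)*y + 3) - y^2)/6 := by linarith
    rw [e]
    linarith

theorem aux_f_nonneg (t : ℝ) (ht : 0 ≤ t) : 0 ≤ fcorr t := by
  have hr : Real.sqrt 3 ^ 2 = 3 := Real.sq_sqrt (by norm_num)
  have hr0 : 1 ≤ Real.sqrt 3 := by rw [Real.one_le_sqrt]; norm_num
  have h1 : 2 * t ≤ xone t := Real.le_sqrt_of_sq_le (by nlinarith [sq_nonneg t])
  have gen : ∀ u : ℝ, 2 * t ≤ u → 0 ≤ (1/3 : ℝ) * ((Real.sqrt 3 / 3) * u^3 - (t/2) * u^2) := by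
    intro u hu
    have : 0 ≤ u^2 * ((Real.sqrt 3 / 3) * u - t/2) := by
      apply mul_nonneg (sq_nonneg _)
      nlinarith
    linarith
  unfold fcorr
  split_ifs with h
  · exact gen _ h1
  · exact gen _ (by linarith)

theorem aux_all (a1 b1 a2 b2 a3 b3 H l0 l1 l2 l3 : ℝ)
    (ha1 : 0 ≤ a1 ∧ a1 ≤ 1) (hb1 : 0 ≤ b1 ∧ b1 ≤ 1)
    (ha2 : 0 ≤ a2 ∧ a2 ≤ 1) (hb2 : 0 ≤ b2 ∧ b2 ≤ 1)
    (ha3 : 0 ≤ a3 ∧ a3 ≤ 1) (hb3 : 0 ≤ b3 ∧ b3 ≤ 1)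
    (hH : H = (l0 + l1 + l2 + l3) / 4)
    (e12 : a1 + l0*l1 + (b1 + l2*l3) = a2 + l0*l2 + (b2 + l1*l3))
    (e13 : a1 + l0*l1 + (b1 + l2*l3) = a3 + l0*l3 + (b3 + l1*l2)) :
    (a1 + l0*l1) * (b1 + l2*l3) + (a2 + l0*l2) * (b2 + l1*l3) + (a3 + l0*l3) * (b3 + l1*l2)
      ≤ 3 * (1 + H^2)^2 + 3 * |H| * fcorr |H| := by
  obtain ⟨s1, hs1⟩ : ∃ s, s = (l0+l1-l2-l3)/2 := ⟨_, rfl⟩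
  obtain ⟨s2, hs2⟩ : ∃ s, s = (l0+l2-l1-l3)/2 := ⟨_, rfl⟩
  obtain ⟨s3, hs3⟩ : ∃ s, s = (l0+l3-l1-l2)/2 := ⟨_, rfl⟩
  have q0 : l0 = H + (s1+s2+s3)/2 := by linarith
  have q1 : l1 = H + (s1-s2-s3)/2 := by linarith
  have q2 : l2 = H + (-s1+s2-s3)/2 := by linarith
  have q3 : l3 = H + (-s1-s2+s3)/2 := by linarith
  clear hs1 hs2 hs3 hH
  subst q0 q1 q2 q3
  rcases le_total (12 + 24*H^2) (s1^2+s2^2+s3^2) with hX | hX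
  · have hxs : Real.sqrt (s1^2+s2^2+s3^2) ^ 2 = s1^2+s2^2+s3^2 := Real.sq_sqrt (by positivity)
    have core := aux_core a1 b1 a2 b2 a3 b3 H s1 s2 s3 _ ha1 hb1 ha2 hb2 ha3 hb3
      (Real.sqrt_nonneg _) hxs (by rw [hxs]; exact hX) (by linarith) (by linarith)
    have F := aux_F |H| (Real.sqrt (s1^2+s2^2+s3^2)) (abs_nonneg H) (by
      unfold xone; apply Real.sqrt_le_sqrt; rw [sq_abs]; exact hX)
    rw [sq_abs] at F
    linarith
  · have hf := mul_nonneg (mul_nonneg (by norm_num : (0:ℝ) ≤ 3) (abs_nonneg H)) (aux_f_nonneg |H| (abs_nonneg H))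
    have hm : ∀ u v : ℝ, u * v ≤ ((u+v)/2)^2 := fun u v => by nlinarith [sq_nonneg (u-v)]
    have m1 := hm (a1 + (H + (s1+s2+s3)/2)*(H + (s1-s2-s3)/2)) (b1 + (H + (-s1+s2-s3)/2)*(H + (-s1-s2+s3)/2))
    have m2 := hm (a2 + (H + (s1+s2+s3)/2)*(H + (-s1+s2-s3)/2)) (b2 + (H + (s1-s2-s3)/2)*(H + (-s1-s2+s3)/2))
    have m3 := hm (a3 + (H + (s1+s2+s3)/2)*(H + (-s1-s2+s3)/2)) (b3 + (H + (s1-s2-s3)/2)*(H + (-s1+s2-s3)/2))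
    rw [← e12] at m2
    rw [← e13] at m3
    have hc : (((a1 + (H + (s1+s2+s3)/2)*(H + (s1-s2-s3)/2)) + (b1 + (H + (-s1+s2-s3)/2)*(H + (-s1-s2+s3)/2)))/2)^2 ≤ (1+H^2)^2 := by
      apply sq_le_sq'
      · linarith [ha1.1, ha2.1, ha3.1, hb1.1, hb2.1, hb3.1]
      · linarith [ha1.2, ha2.2, ha3.2, hb1.2, hb2.2, hb3.2, sq_nonneg s1, sq_nonneg s2, sq_nonneg s3]
    linarith

theorem stmt_17 (Rbar : Fin 4 → Fin 4 → Fin 4 → Fin 4 → ℝ) (lam : Fin 4 → ℝ) (H : ℝ)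
    (hanti1 : ∀ i j k l, Rbar i j k l = -Rbar j i k l)
    (hanti2 : ∀ i j k l, Rbar i j k l = -Rbar i j l k)
    (hpair : ∀ i j k l, Rbar i j k l = Rbar k l i j)
    (hbianchi : ∀ i j k l, Rbar i j k l + Rbar j k i l + Rbar k i j l = 0)
    (hsec : ∀ i j, i ≠ j → 0 ≤ Rbar i j i j ∧ Rbar i j i j ≤ 1)
    (hH : H = (lam 0 + lam 1 + lam 2 + lam 3) / 4)
    (hweyl : ∀ i j k l, weyl (gaussCurv Rbar lam) i j k l = 0) :
    (scal (gaussCurv Rbar lam))^2 / 12 - ricciNormSq (gaussCurv Rbar lam) / 4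
      ≤ 3 * (1 + H^2)^2 + 3 * |H| * fcorr |H| := by
  have z : ∀ i k l, Rbar i i k l = 0 := fun i k l => by linarith [hanti1 i i k l]
  have sw : ∀ i j, Rbar j i j i = Rbar i j i j := fun i j => by
    rw [hanti1 j i j i, hanti2 i j j i, neg_neg]
  have main := aux_all (Rbar 0 1 0 1) (Rbar 2 3 2 3) (Rbar 0 2 0 2) (Rbar 1 3 1 3)
    (Rbar 0 3 0 3) (Rbar 1 2 1 2) H (lam 0) (lam 1) (lam 2) (lam 3)
    (hsec _ _ (by decide)) (hsec _ _ (by decide)) (hsec _ _ (by decide))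
    (hsec _ _ (by decide)) (hsec _ _ (by decide)) (hsec _ _ (by decide)) hH
  set R := gaussCurv Rbar lam with hR
  have r0 : ricci R 0 0 = (Rbar 0 1 0 1 + lam 0 * lam 1) + (Rbar 0 2 0 2 + lam 0 * lam 2) + (Rbar 0 3 0 3 + lam 0 * lam 3) := by
    simp [ricci, hR, gaussCurv, kdelta, Fin.sum_univ_four, z]
  have r1 : ricci R 1 1 = (Rbar 0 1 0 1 + lam 0 * lam 1) + (Rbar 1 2 1 2 + lam 1 * lam 2) + (Rbar 1 3 1 3 + lam 1 * lam 3) := by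
    simp [ricci, hR, gaussCurv, kdelta, Fin.sum_univ_four, z, sw 0 1]; ring
  have r2 : ricci R 2 2 = (Rbar 0 2 0 2 + lam 0 * lam 2) + (Rbar 1 2 1 2 + lam 1 * lam 2) + (Rbar 2 3 2 3 + lam 2 * lam 3) := by
    simp [ricci, hR, gaussCurv, kdelta, Fin.sum_univ_four, z, sw 0 2, sw 1 2]; ring
  have r3 : ricci R 3 3 = (Rbar 0 3 0 3 + lam 0 * lam 3) + (Rbar 1 3 1 3 + lam 1 * lam 3) + (Rbar 2 3 2 3 + lam 2 * lam 3) := by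
    simp [ricci, hR, gaussCurv, kdelta, Fin.sum_univ_four, z, sw 0 3, sw 1 3, sw 2 3]; ring
  have hS : scal R = ricci R 0 0 + ricci R 1 1 + ricci R 2 2 + ricci R 3 3 := by
    simp [scal, Fin.sum_univ_four]
  have hN : (ricci R 0 0)^2 + (ricci R 1 1)^2 + (ricci R 2 2)^2 + (ricci R 3 3)^2 ≤ ricciNormSq R := by
    simp only [ricciNormSq, Fin.sum_univ_four]
    have := fun i j => sq_nonneg (ricci R i j)
    linarith [this 0 1, this 0 2, this 0 3, this 1 0, this 1 2, this 1 3, this 2 0, this 2 1, this 2 3, this 3 0, this 3 1, this 3 2]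
  have w1 := hweyl 0 1 0 1
  have w2 := hweyl 0 2 0 2
  have w3 := hweyl 0 3 0 3
  have g1 : R 0 1 0 1 = Rbar 0 1 0 1 + lam 0 * lam 1 := by simp [hR, gaussCurv, kdelta]
  have g2 : R 0 2 0 2 = Rbar 0 2 0 2 + lam 0 * lam 2 := by simp [hR, gaussCurv, kdelta]
  have g3 : R 0 3 0 3 = Rbar 0 3 0 3 + lam 0 * lam 3 := by simp [hR, gaussCurv, kdelta]
  simp [weyl, kdelta, hS, r0, r1, r2, r3, g1, g2, g3] at w1 w2 w3
  rw [r0, r1, r2, r3] at hS hN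
  generalize Rbar 0 1 0 1 + lam 0 * lam 1 = k01 at *
  generalize Rbar 0 2 0 2 + lam 0 * lam 2 = k02 at *
  generalize Rbar 0 3 0 3 + lam 0 * lam 3 = k03 at *
  generalize Rbar 1 2 1 2 + lam 1 * lam 2 = k12 at *
  generalize Rbar 1 3 1 3 + lam 1 * lam 3 = k13 at *
  generalize Rbar 2 3 2 3 + lam 2 * lam 3 = k23 at *
  have e1 : k01 + k23 = k02 + k13 := by linarith
  have e2 : k01 + k23 = k03 + k12 := by linarith
  have m := main e1 e2
  obtain rfl : k13 = k01 + k23 - k02 := by linarith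
  obtain rfl : k12 = k01 + k23 - k03 := by linarith
  rw [hS]
  linarith
end
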